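/- Let A be an n×n real symmetric matrix with all entries nonnegative, and suppose λ₂, the second-largest eigenvalue of A (counted with multiplicity), satisfies λ₂ > 2, with corresponding eigenvector v having both positive and negative coordinates. Let P = {i : v i > 0} and let A_P be the principal submatrix of A on index set P. Then A_P has an eigenvalue λ ≥ λ₂. -/

import Mathlib

/-!
Let `x` be the restriction of `v` to `P = {i | 0 < v i}`. For `i ∈ P` the columns outside `P`
contribute nonpositive terms to `(A v) i`, so dropping them gives `λ x ≤ A_P x`. Pairing with
`x ≥ 0` shows that the Rayleigh quotient of `A_P` at `x` is at least `λ`, and the maximum of the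
Rayleigh quotient of a symmetric matrix is an eigenvalue.
-/

open Matrix Module.End
open scoped InnerProductSpace

section Rayleigh

variable {𝕜 : Type*} [RCLike 𝕜] {c : ℝ}

theorem exists_hasEigenvalue_ge_of_le_re_inner {E : Type*} [NormedAddCommGroup E]
    [InnerProductSpace 𝕜 E] [FiniteDimensional 𝕜 E] {T : E →ₗ[𝕜] E} (hT : T.IsSymmetric)
    {x : E} (hx : x ≠ 0) (h : c * ‖x‖ ^ 2 ≤ RCLike.re ⟪T x, x⟫_𝕜) :
    ∃ μ : ℝ, HasEigenvalue T (μ : 𝕜) ∧ c ≤ μ := by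
  have : Nontrivial E := ⟨x, 0, hx⟩
  have hbdd : BddAbove (Set.range fun y : {y : E // y ≠ 0} ↦
      RCLike.re ⟪T y, y⟫_𝕜 / ‖(y : E)‖ ^ 2) := by
    refine ⟨‖T.toContinuousLinearMap‖, ?_⟩
    rintro _ ⟨y, rfl⟩
    exact (le_abs_self _).trans (T.toContinuousLinearMap.rayleighQuotient_le_norm y)
  refine ⟨_, hT.hasEigenvalue_iSup_of_finiteDimensional, ?_⟩
  calc c ≤ RCLike.re ⟪T x, x⟫_𝕜 / ‖x‖ ^ 2 := (le_div_iff₀ (by positivity)).2 h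
    _ ≤ ⨆ y : {y : E // y ≠ 0}, RCLike.re ⟪T y, y⟫_𝕜 / ‖(y : E)‖ ^ 2 := le_ciSup hbdd ⟨x, hx⟩

variable {ι : Type*} [Fintype ι]

theorem exists_mulVec_eq_smul_ge_of_le_re_dotProduct {B : Matrix ι ι 𝕜} (hB : B.IsHermitian)
    {x : ι → 𝕜} (hx : x ≠ 0)
    (h : c * RCLike.re (star x ⬝ᵥ x) ≤ RCLike.re (star x ⬝ᵥ B *ᵥ x)) :
    ∃ (μ : ℝ) (w : ι → 𝕜), w ≠ 0 ∧ B *ᵥ w = μ • w ∧ c ≤ μ := by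
  classical
  have hT : (toEuclideanLin B).IsSymmetric := isSymmetric_toEuclideanLin_iff.2 hB
  have hx' : WithLp.toLp 2 x ≠ 0 := by simpa using hx
  have hnorm : ‖WithLp.toLp 2 x‖ ^ 2 = RCLike.re (star x ⬝ᵥ x) := by
    rw [← inner_self_eq_norm_sq (𝕜 := 𝕜), EuclideanSpace.inner_toLp_toLp, dotProduct_comm]
  have hinner : RCLike.re ⟪toEuclideanLin B (WithLp.toLp 2 x), WithLp.toLp 2 x⟫_𝕜 =
      RCLike.re (star x ⬝ᵥ B *ᵥ x) := by
    rw [hT, toLpLin_toLp, EuclideanSpace.inner_toLp_toLp, toLin'_apply, dotProduct_comm]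
  obtain ⟨μ, hμ, hcμ⟩ := exists_hasEigenvalue_ge_of_le_re_inner hT hx' (by rwa [hnorm, hinner])
  obtain ⟨w, hw⟩ := hμ.exists_hasEigenvector
  refine ⟨μ, w.ofLp, by simpa using hw.2, ?_, hcμ⟩
  rw [RCLike.real_smul_eq_coe_smul (K := 𝕜) μ w.ofLp]
  exact congrArg WithLp.ofLp hw.apply_eq_smul

theorem exists_mulVec_eq_smul_ge_of_smul_le_mulVec {B : Matrix ι ι ℝ} (hB : B.IsHermitian)
    {x : ι → ℝ} (hx : 0 < x) (h : c • x ≤ B *ᵥ x) :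
    ∃ (μ : ℝ) (w : ι → ℝ), w ≠ 0 ∧ B *ᵥ w = μ • w ∧ c ≤ μ := by
  refine exists_mulVec_eq_smul_ge_of_le_re_dotProduct hB hx.ne' ?_
  simpa using dotProduct_le_dotProduct_of_nonneg_left h hx.le

end Rayleigh

theorem mulVec_le_submatrix_mulVec_of_pairwise_nonneg {ι R : Type*} [Fintype ι]
    [NonUnitalNonAssocSemiring R] [LinearOrder R] [IsOrderedAddMonoid R] [PosMulMono R]
    {A : Matrix ι ι R} (hA : Pairwise fun i j ↦ 0 ≤ A i j) (v : ι → R) (i : {i // 0 < v i}) :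
    (A *ᵥ v) i ≤ (A.submatrix Subtype.val Subtype.val *ᵥ fun j : {j // 0 < v j} ↦ v j) i := by
  have hdropped : ∑ j : {j // ¬ 0 < v j}, A i j * v j ≤ 0 :=
    Finset.sum_nonpos fun j _ ↦ mul_nonpos_of_nonneg_of_nonpos
      (hA fun hij ↦ j.2 (hij ▸ i.2)) (not_lt.1 j.2)
  calc (A *ᵥ v) i
      = ∑ j : {j // 0 < v j}, A i j * v j + ∑ j : {j // ¬ 0 < v j}, A i j * v j :=
        (Fintype.sum_subtype_add_sum_subtype (fun j ↦ 0 < v j) fun j ↦ A i j * v j).symm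
    _ ≤ ∑ j : {j // 0 < v j}, A i j * v j := add_le_of_nonpos_right hdropped

theorem stmt_3_general {ι : Type*} [Fintype ι] {A : Matrix ι ι ℝ} (hA : A.IsHermitian)
    (hoff : Pairwise fun i j ↦ 0 ≤ A i j) {c : ℝ} {v : ι → ℝ} (hv : c • v ≤ A *ᵥ v)
    (hP : ∃ i, 0 < v i) :
    ∃ (μ : ℝ) (w : {i // 0 < v i} → ℝ), w ≠ 0 ∧
      A.submatrix Subtype.val Subtype.val *ᵥ w = μ • w ∧ c ≤ μ := by
  obtain ⟨i, hi⟩ := hP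
  have hpos : 0 < fun j : {j // 0 < v j} ↦ v j :=
    Pi.lt_def.2 ⟨fun j ↦ j.2.le, ⟨i, hi⟩, hi⟩
  exact exists_mulVec_eq_smul_ge_of_smul_le_mulVec (hA.submatrix _) hpos fun j ↦
    (hv j).trans (mulVec_le_submatrix_mulVec_of_pairwise_nonneg hoff v j)

theorem stmt_3 (n : ℕ) (A : Matrix (Fin n) (Fin n) ℝ) (hA : A.IsHermitian)
    (hpos : ∀ i j, 0 ≤ A i j) (lam2 : ℝ) (hlam2 : 2 < lam2)
    (v : Fin n → ℝ) (heig : A.mulVec v = lam2 • v)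
    (hP : ∃ i, 0 < v i) (hN : ∃ i, v i < 0) :
    ∃ (lam : ℝ) (w : {i : Fin n // 0 < v i} → ℝ), w ≠ 0 ∧
      (A.submatrix (fun i : {i : Fin n // 0 < v i} => (i : Fin n))
        (fun i : {i : Fin n // 0 < v i} => (i : Fin n))).mulVec w = lam • w ∧
      lam2 ≤ lam :=
  stmt_3_general hA (fun i j _ ↦ hpos i j) heig.ge hP
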